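/- For all integers d ≥ 2, q with 1 ≤ q ≤ d-1, γ with 0 ≤ γ ≤ q-1, and all reals K < 0 and u > 0, one has P(d,q,γ,K,u) < 1. (Equivalently, in the hyperbolic space of curvature K < 0 the random flats E and L fail to intersect with strictly positive probability.) -/

import Mathlib

open Real MeasureTheory Filter Asymptotics

/-- Surface area `ω_n = 2 π^{n/2} / Γ(n/2)` of the Euclidean unit sphere in `ℝ^n`. -/
noncomputable def omegaS (n : ℕ) : ℝ := 2 * Real.pi ^ ((n : ℝ) / 2) / Real.Gamma ((n : ℝ) / 2)

/-- The constant `D(d,q,γ)`. -/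
noncomputable def Dconst (d q γ : ℕ) : ℝ :=
  omegaS (γ + 1) * omegaS (q - γ) * omegaS (d - q) / (omegaS (d - q + γ + 1) * omegaS (d - γ))

/-- `R_K(x)`, the Euclidean (Beltrami–Klein) radius of a hyperbolic ball of radius `x`. -/
noncomputable def RK (K x : ℝ) : ℝ :=
  Real.sinh (Real.sqrt (-K) * x) /
    (Real.sqrt (-K) * Real.sqrt (1 + Real.sinh (Real.sqrt (-K) * x) ^ 2))

/-- `C_K(d,m,u)`, the invariant measure of the `m`-flats meeting the ball of radius `u`. -/
noncomputable def Cconst (K : ℝ) (d m : ℕ) (u : ℝ) : ℝ :=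
  omegaS (d - m) * Real.sqrt (-K) ^ (-(d : ℝ) + (m : ℝ) + 1) *
    ∫ r in (0:ℝ)..u,
      Real.cosh (Real.sqrt (-K) * r) ^ m * Real.sinh (Real.sqrt (-K) * r) ^ (d - m - 1)

/-- `P(d,q,γ,K,u)`, the hyperbolic intersection probability of the random flats `E` and `L`. -/
noncomputable def Pprob (d q γ : ℕ) (K u : ℝ) : ℝ :=
  Dconst d q γ * omegaS (d - γ) / Cconst K d (d - q + γ) u *
    ∫ r in (0:ℝ)..(1 / Real.sqrt (-K)),
      r ^ ((q : ℝ) - (γ : ℝ) - 1) *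
        ∫ z in (0:ℝ)..(min 1 (RK K u / r)),
          z ^ q * (1 - z ^ 2) ^ (((d : ℝ) - (q : ℝ)) / 2 - 1) *
            (1 + K * r ^ 2 * z ^ 2) ^ (-((d : ℝ) + 1) / 2)

/-- `F_{K,u}(δ)`, the distribution function of the distance of `E ∩ L` to the origin. -/
noncomputable def Fdist (d q γ : ℕ) (K u δ : ℝ) : ℝ :=
  Dconst d q γ * omegaS (d - γ) / Cconst K d (d - q + γ) u *
    ∫ r in (0:ℝ)..(RK K δ),
      r ^ ((q : ℝ) - (γ : ℝ) - 1) *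
        ∫ z in (0:ℝ)..(min 1 (RK K u / r)),
          z ^ q * (1 - z ^ 2) ^ (((d : ℝ) - (q : ℝ)) / 2 - 1) *
            (1 + K * r ^ 2 * z ^ 2) ^ (-((d : ℝ) + 1) / 2)

/-- `f_{d,q,γ,K}(δ)`, the density of the distance of `E ∩ L` to the origin. -/
noncomputable def fdens (d q γ : ℕ) (K u δ : ℝ) : ℝ :=
  Dconst d q γ * omegaS (d - γ) / Cconst K d (d - q + γ) u *
    (RK K δ ^ ((q : ℝ) - (γ : ℝ) - 1) / Real.cosh (Real.sqrt (-K) * δ) ^ 2) *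
    ∫ z in (0:ℝ)..(min 1 (RK K u / RK K δ)),
      z ^ q * (1 - z ^ 2) ^ (((d : ℝ) - (q : ℝ)) / 2 - 1) *
        (1 + K * RK K δ ^ 2 * z ^ 2) ^ (-((d : ℝ) + 1) / 2)

/-- The limiting constant `ρ(u,q,γ,κ)` in the critical phase. -/
noncomputable def rhoConst (u : ℝ) (q γ : ℕ) (κ : ℝ) : ℝ :=
  omegaS (γ + 1) * (2 * Real.pi) ^ (-((γ : ℝ) + 1) / 2) * u ^ (q + 1) *
    κ ^ (((γ : ℝ) + 1) / 2) *
    (∫ s in (0:ℝ)..u, Real.exp (κ * s ^ 2 / 2) * s ^ ((q : ℝ) - (γ : ℝ) - 1))⁻¹ *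
    ∫ r in (0:ℝ)..1,
      r ^ ((q : ℝ) - (γ : ℝ) - 1) *
        ∫ v in (0:ℝ)..(1 / r),
          v ^ q * Real.exp (-(1 / 2) * u ^ 2 * κ * v ^ 2 * (1 - r ^ 2))

/-!
In the Beltrami–Klein model the space is the ball of radius `a = 1 / √(-K)`. Substituting
`s = R_K(r)` turns `C_K` into `ω_{d-m}` times the integral over `(0, R)`, `R = R_K(u)`, of a density
`φ` of the Klein distance, and then `P` is
`∫₀ᵃ ∫₀^{min(1, R/r)} w(z) z φ(rz) dz dr / (∫₀¹ w · ∫₀ᴿ φ)` with `w(z) = z^γ (1 - z²)^{(d-q)/2-1}`.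
By Fubini and `s = rz` the numerator is `∫₀¹ w(z) ∫₀^{min(az, R)} φ(s) ds dz`. Since `a` is finite,
the inner integral falls short of `∫₀ᴿ φ` for `z < R/a`, whence the strict inequality.
-/

open Set
open scoped Topology
open ProbabilityTheory (beta beta_pos)

section Scaling

variable {w h : ℝ → ℝ} {a : ℝ}

lemma integral_mul_lt_integral_mul_of_continuousOn {G : ℝ → ℝ} {b M : ℝ} (hab : a < b)
    (hw : IntervalIntegrable w volume a b) (hw_pos : ∀ z ∈ Ioo a b, 0 < w z)
    (hG : ContinuousOn G (Icc a b)) (hG_le : ∀ z ∈ Icc a b, G z ≤ M)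
    (hG_lt : ∃ z ∈ Icc a b, G z < M) :
    ∫ z in a..b, w z * G z < (∫ z in a..b, w z) * M := by
  obtain ⟨z₀, hz₀, hz₀_lt⟩ := hG_lt
  have hG_Ioo : ContinuousOn G (Ioo a b) := hG.mono Ioo_subset_Icc_self
  have hS_open : IsOpen (Ioo a b ∩ G ⁻¹' Iio M) :=
    hG_Ioo.isOpen_inter_preimage isOpen_Ioo isOpen_Iio
  have hS_nonempty : (Ioo a b ∩ G ⁻¹' Iio M).Nonempty := by
    have : (𝓝[Ioo a b] z₀).NeBot :=
      mem_closure_iff_nhdsWithin_neBot.1 (by rwa [closure_Ioo hab.ne])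
    have hev : ∀ᶠ z in 𝓝[Ioo a b] z₀, G z < M :=
      ((hG z₀ hz₀).mono Ioo_subset_Icc_self).eventually_lt_const hz₀_lt
    exact (eventually_mem_nhdsWithin.and hev).exists
  rw [← intervalIntegral.integral_mul_const]
  refine intervalIntegral.integral_lt_integral_of_ae_le_of_measure_setOfPred_lt_ne_zero hab.le
    (hw.mul_continuousOn (by rwa [uIcc_of_le hab.le])) (hw.mul_const M) ?_ ?_
  · rw [← restrict_Ioo_eq_restrict_Ioc]
    filter_upwards [ae_restrict_mem measurableSet_Ioo] with z hz
    exact mul_le_mul_of_nonneg_left (hG_le z ⟨hz.1.le, hz.2.le⟩) (hw_pos z hz).le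
  · rw [← restrict_Ioo_eq_restrict_Ioc]
    refine ((hS_open.measure_pos volume hS_nonempty).trans_le ?_).ne'
    refine (measure_mono ?_).trans (Measure.le_restrict_apply _ _)
    rintro z ⟨hz, hz_lt⟩
    exact ⟨mul_lt_mul_of_pos_left hz_lt (hw_pos z hz), hz⟩

lemma integral_norm_mul_comp_mul_le (c : ℝ) {z : ℝ} (ha : 0 ≤ a) (hz : z ∈ Icc 0 1)
    (hh : IntervalIntegrable h volume 0 a) :
    ∫ r in (0 : ℝ)..a, ‖c * (z * h (r * z))‖ ≤ ‖c‖ * ∫ s in (0 : ℝ)..a, ‖h s‖ := by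
  calc ∫ r in (0 : ℝ)..a, ‖c * (z * h (r * z))‖
      = ‖c‖ * ∫ s in (0 : ℝ)..a * z, ‖h s‖ := by
        simp only [norm_mul, norm_of_nonneg hz.1, intervalIntegral.integral_const_mul,
          intervalIntegral.mul_integral_comp_mul_right (f := fun s => ‖h s‖), zero_mul]
    _ ≤ ‖c‖ * ∫ s in (0 : ℝ)..a, ‖h s‖ := by
        gcongr
        exact intervalIntegral.integral_mono_interval le_rfl (mul_nonneg ha hz.1)
          (mul_le_of_le_one_right ha hz.2) (ae_of_all _ fun s => norm_nonneg _) hh.norm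

lemma integrable_prod_mul_comp_mul (ha : 0 ≤ a) (hw : IntervalIntegrable w volume 0 1)
    (hh_meas : Measurable h) (hh : IntervalIntegrable h volume 0 a) :
    Integrable (fun p : ℝ × ℝ => w p.2 * (p.2 * h (p.1 * p.2)))
      ((volume.restrict (Ioc 0 a)).prod (volume.restrict (Ioc 0 1))) := by
  have hw_on : IntegrableOn w (Ioc 0 1) :=
    (intervalIntegrable_iff_integrableOn_Ioc_of_le zero_le_one).1 hw
  have hmeas : AEStronglyMeasurable (fun p : ℝ × ℝ => w p.2 * (p.2 * h (p.1 * p.2)))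
      ((volume.restrict (Ioc 0 a)).prod (volume.restrict (Ioc 0 1))) :=
    hw_on.aestronglyMeasurable.comp_snd.mul
      (by fun_prop : Measurable fun p : ℝ × ℝ => p.2 * h (p.1 * p.2)).aestronglyMeasurable
  have hh_sub {z : ℝ} (hz : z ∈ Ioc (0 : ℝ) 1) : uIcc 0 (a * z) ⊆ uIcc 0 a := by
    rw [uIcc_of_le ha, uIcc_of_le (mul_nonneg ha hz.1.le)]
    exact Icc_subset_Icc_right (mul_le_of_le_one_right ha hz.2)
  refine (integrable_prod_iff' hmeas).2 ⟨?_, ?_⟩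
  · filter_upwards [ae_restrict_mem measurableSet_Ioc] with z hz
    have hscale : IntervalIntegrable (fun r => h (r * z)) volume 0 a := by
      simpa [hz.1.ne'] using (hh.mono_set (hh_sub hz)).comp_mul_right (c := z)
    exact ((intervalIntegrable_iff_integrableOn_Ioc_of_le ha).1 hscale).const_mul z |>.const_mul _
  · refine (hw_on.norm.mul_const (∫ s in (0 : ℝ)..a, ‖h s‖)).mono'
      hmeas.norm.prod_swap.integral_prod_right' ?_
    filter_upwards [ae_restrict_mem measurableSet_Ioc] with z hz
    rw [norm_of_nonneg (integral_nonneg fun r => norm_nonneg _),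
      ← intervalIntegral.integral_of_le ha]
    exact integral_norm_mul_comp_mul_le (w z) ha (Ioc_subset_Icc_self hz) hh

lemma integral_integral_mul_comp_mul (ha : 0 ≤ a) (hw : IntervalIntegrable w volume 0 1)
    (hh_meas : Measurable h) (hh : IntervalIntegrable h volume 0 a) :
    ∫ r in (0 : ℝ)..a, ∫ z in (0 : ℝ)..1, w z * (z * h (r * z)) =
      ∫ z in (0 : ℝ)..1, w z * ∫ s in (0 : ℝ)..a * z, h s := by
  calc ∫ r in (0 : ℝ)..a, ∫ z in (0 : ℝ)..1, w z * (z * h (r * z))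
      = ∫ z in (0 : ℝ)..1, ∫ r in (0 : ℝ)..a, w z * (z * h (r * z)) := by
        simp only [intervalIntegral.integral_of_le ha,
          intervalIntegral.integral_of_le (zero_le_one (α := ℝ))]
        exact integral_integral_swap (integrable_prod_mul_comp_mul ha hw hh_meas hh)
    _ = ∫ z in (0 : ℝ)..1, w z * ∫ s in (0 : ℝ)..a * z, h s := by
        simp only [intervalIntegral.integral_const_mul,
          intervalIntegral.mul_integral_comp_mul_right, zero_mul]

lemma integral_integral_mul_comp_mul_lt (ha : 0 ≤ a) (hw : IntervalIntegrable w volume 0 1)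
    (hw_pos : ∀ z ∈ Ioo 0 1, 0 < w z) (hh_meas : Measurable h)
    (hh : IntervalIntegrable h volume 0 a) (hh_nonneg : 0 ≤ h)
    (hh_pos : 0 < ∫ s in (0 : ℝ)..a, h s) :
    ∫ r in (0 : ℝ)..a, ∫ z in (0 : ℝ)..1, w z * (z * h (r * z)) <
      (∫ z in (0 : ℝ)..1, w z) * ∫ s in (0 : ℝ)..a, h s := by
  rw [integral_integral_mul_comp_mul ha hw hh_meas hh]
  have hmaps : MapsTo (fun z => a * z) (Icc 0 1) (Icc 0 a) := fun z hz =>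
    ⟨mul_nonneg ha hz.1, mul_le_of_le_one_right ha hz.2⟩
  refine integral_mul_lt_integral_mul_of_continuousOn zero_lt_one hw hw_pos ?_ (fun z hz => ?_)
    ⟨0, ⟨le_rfl, zero_le_one⟩, by simpa using hh_pos⟩
  · have hprimitive : ContinuousOn (fun x => ∫ s in (0 : ℝ)..x, h s) (Icc 0 a) := by
      rw [← uIcc_of_le ha]
      exact intervalIntegral.continuousOn_primitive_interval ((intervalIntegrable_iff').1 hh)
    exact hprimitive.comp (by fun_prop) hmaps
  · exact intervalIntegral.integral_mono_interval le_rfl (hmaps hz).1 (hmaps hz).2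
      (ae_of_all _ hh_nonneg) hh

lemma integral_mul_indicator_comp_mul (w : ℝ → ℝ) {φ : ℝ → ℝ} {T r : ℝ} (hT : 0 ≤ T)
    (hr : 0 < r) :
    ∫ z in (0 : ℝ)..1, w z * (z * (Ioc 0 T).indicator φ (r * z)) =
      ∫ z in (0 : ℝ)..min 1 (T / r), w z * (z * φ (r * z)) := by
  have hpull : ∀ z, w z * (z * (Ioc 0 T).indicator φ (r * z)) =
      (Ioc 0 (T / r)).indicator (fun z => w z * (z * φ (r * z))) z := fun z => by
    have hmem : r * z ∈ Ioc 0 T ↔ z ∈ Ioc 0 (T / r) := by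
      simp [hr, le_div_iff₀' hr]
    by_cases hz : z ∈ Ioc 0 (T / r)
    · rw [indicator_of_mem (hmem.2 hz), indicator_of_mem hz]
    · rw [indicator_of_notMem (mt hmem.1 hz), indicator_of_notMem hz, mul_zero, mul_zero]
  simp only [hpull]
  rw [intervalIntegral.integral_of_le zero_le_one, intervalIntegral.integral_of_le (by positivity),
    setIntegral_indicator measurableSet_Ioc, Ioc_inter_Ioc, max_self]

lemma integral_indicator_Ioc_of_le {φ : ℝ → ℝ} {T : ℝ} (hT : 0 ≤ T) (hTa : T ≤ a) :
    ∫ s in (0 : ℝ)..a, (Ioc 0 T).indicator φ s = ∫ s in (0 : ℝ)..T, φ s := by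
  rw [intervalIntegral.integral_of_le (hT.trans hTa), intervalIntegral.integral_of_le hT,
    setIntegral_indicator measurableSet_Ioc, inter_eq_right.2 (Ioc_subset_Ioc_right hTa)]

lemma integral_integral_min_mul_comp_mul_lt {φ : ℝ → ℝ} {T : ℝ} (hT : 0 < T) (hTa : T ≤ a)
    (hw : IntervalIntegrable w volume 0 1) (hw_pos : ∀ z ∈ Ioo 0 1, 0 < w z)
    (hφ_meas : Measurable φ) (hφ : IntervalIntegrable φ volume 0 T)
    (hφ_pos : ∀ s ∈ Ioc 0 T, 0 < φ s) :
    ∫ r in (0 : ℝ)..a, ∫ z in (0 : ℝ)..min 1 (T / r), w z * (z * φ (r * z)) <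
      (∫ z in (0 : ℝ)..1, w z) * ∫ s in (0 : ℝ)..T, φ s := by
  have ha : 0 ≤ a := hT.le.trans hTa
  have hφ_ind : IntervalIntegrable ((Ioc 0 T).indicator φ) volume 0 a :=
    (((intervalIntegrable_iff_integrableOn_Ioc_of_le hT.le).1 hφ).integrable_indicator
      measurableSet_Ioc).intervalIntegrable
  calc ∫ r in (0 : ℝ)..a, ∫ z in (0 : ℝ)..min 1 (T / r), w z * (z * φ (r * z))
      = ∫ r in (0 : ℝ)..a, ∫ z in (0 : ℝ)..1,
          w z * (z * (Ioc 0 T).indicator φ (r * z)) := by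
        refine intervalIntegral.integral_congr_ae (ae_of_all _ fun r hr => ?_)
        rw [uIoc_of_le ha] at hr
        exact (integral_mul_indicator_comp_mul w hT.le hr.1).symm
    _ < (∫ z in (0 : ℝ)..1, w z) * ∫ s in (0 : ℝ)..a, (Ioc 0 T).indicator φ s := by
        refine integral_integral_mul_comp_mul_lt ha hw hw_pos
          (hφ_meas.indicator measurableSet_Ioc) hφ_ind
          (indicator_nonneg fun s hs => (hφ_pos s hs).le) ?_
        rw [integral_indicator_Ioc_of_le hT.le hTa]
        exact intervalIntegral.intervalIntegral_pos_of_pos_on hφ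
          (fun s hs => hφ_pos s ⟨hs.1, hs.2.le⟩) hT
    _ = (∫ z in (0 : ℝ)..1, w z) * ∫ s in (0 : ℝ)..T, φ s := by
        rw [integral_indicator_Ioc_of_le hT.le hTa]

end Scaling

section Sphere

lemma integral_rpow_mul_one_sub_rpow {α β : ℝ} (hα : 0 < α) (hβ : 0 < β) :
    ∫ x in (0 : ℝ)..1, x ^ (α - 1) * (1 - x) ^ (β - 1) = beta α β := by
  have hcast : Complex.betaIntegral α β =
      ((∫ x in (0 : ℝ)..1, x ^ (α - 1) * (1 - x) ^ (β - 1) : ℝ) : ℂ) := by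
    rw [Complex.betaIntegral, ← intervalIntegral.integral_ofReal]
    refine intervalIntegral.integral_congr fun x hx => ?_
    rw [uIcc_of_le zero_le_one] at hx
    push_cast [Complex.ofReal_cpow hx.1, Complex.ofReal_cpow (sub_nonneg.2 hx.2)]
    rfl
  rw [ProbabilityTheory.beta_eq_betaIntegralReal α β hα hβ, hcast, Complex.ofReal_re]

lemma sq_image_Ioo_zero_one : (fun z : ℝ => z ^ 2) '' Ioo 0 1 = Ioo 0 1 := by
  ext x
  refine ⟨?_, fun hx => ⟨√x, ⟨Real.sqrt_pos.2 hx.1, ?_⟩, Real.sq_sqrt hx.1.le⟩⟩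
  · rintro ⟨z, hz, rfl⟩
    exact ⟨pow_pos hz.1 2, pow_lt_one₀ hz.1.le hz.2 two_ne_zero⟩
  · exact (Real.sqrt_lt' one_pos).2 (by simpa using hx.2)

lemma integral_rpow_mul_one_sub_sq_rpow {α β : ℝ} (hα : 0 < α) (hβ : 0 < β) :
    ∫ z in (0 : ℝ)..1, z ^ (2 * α - 1) * (1 - z ^ 2) ^ (β - 1) = beta α β / 2 := by
  have hsubst := integral_image_eq_integral_abs_deriv_smul measurableSet_Ioo
    (fun z _ => (hasDerivAt_pow 2 z).hasDerivWithinAt)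
    ((pow_left_strictMonoOn₀ two_ne_zero).injOn.mono
      fun z (hz : z ∈ Ioo (0 : ℝ) 1) => hz.1.le)
    (fun x : ℝ => x ^ (α - 1) * (1 - x) ^ (β - 1))
  have hintegrand : ∀ z ∈ Ioo (0 : ℝ) 1,
      |((2 : ℕ) : ℝ) * z ^ (2 - 1)| • ((z ^ 2) ^ (α - 1) * (1 - z ^ 2) ^ (β - 1)) =
        2 * (z ^ (2 * α - 1) * (1 - z ^ 2) ^ (β - 1)) := fun z hz => by
    have hz0 : 0 < z := hz.1
    have hpow : z * (z ^ 2) ^ (α - 1) = z ^ (2 * α - 1) := by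
      rw [← Real.rpow_natCast_mul hz0.le, show 2 * α - 1 = 1 + ((2 : ℕ) : ℝ) * (α - 1) by
        push_cast; ring, Real.rpow_add hz0, Real.rpow_one]
    rw [← hpow, smul_eq_mul, abs_of_pos (by positivity)]
    push_cast
    ring
  rw [sq_image_Ioo_zero_one, setIntegral_congr_fun measurableSet_Ioo hintegrand, integral_const_mul,
    ← integral_Ioc_eq_integral_Ioo, ← integral_Ioc_eq_integral_Ioo,
    ← intervalIntegral.integral_of_le zero_le_one, ← intervalIntegral.integral_of_le zero_le_one,
    integral_rpow_mul_one_sub_rpow hα hβ] at hsubst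
  linarith

/-- Up to normalization, the density on `(0, 1)` of the norm of the projection to `ℝ^(m+1)` of a
uniformly distributed point of the unit sphere of `ℝ^(m+1+n)`. -/
noncomputable def projNormWeight (m n : ℕ) (z : ℝ) : ℝ := z ^ m * (1 - z ^ 2) ^ ((n : ℝ) / 2 - 1)

lemma omegaS_pos {n : ℕ} (hn : 0 < n) : 0 < omegaS n := by
  have hn' : 0 < (n : ℝ) / 2 := by positivity
  have := Real.Gamma_pos_of_pos hn'
  unfold omegaS
  positivity

lemma projNormWeight_pos (m n : ℕ) {z : ℝ} (hz : z ∈ Ioo 0 1) : 0 < projNormWeight m n z := by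
  have hz0 : 0 < z := hz.1
  have hz2 : 0 < 1 - z ^ 2 := sub_pos.2 (pow_lt_one₀ hz.1.le hz.2 two_ne_zero)
  unfold projNormWeight
  positivity

lemma integral_projNormWeight (m : ℕ) {n : ℕ} (hn : 0 < n) :
    ∫ z in (0 : ℝ)..1, projNormWeight m n z = beta (((m + 1 : ℕ) : ℝ) / 2) (n / 2) / 2 := by
  rw [← integral_rpow_mul_one_sub_sq_rpow (by positivity) (by positivity)]
  refine intervalIntegral.integral_congr fun z _ => ?_
  have hexp : 2 * (((m + 1 : ℕ) : ℝ) / 2) - 1 = m := by push_cast; ring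
  simp only [projNormWeight, hexp, Real.rpow_natCast]

lemma intervalIntegrable_projNormWeight (m : ℕ) {n : ℕ} (hn : 0 < n) :
    IntervalIntegrable (projNormWeight m n) volume 0 1 := by
  refine intervalIntegral.intervalIntegrable_of_integral_ne_zero ?_
  rw [integral_projNormWeight m hn]
  have := beta_pos (α := ((m + 1 : ℕ) : ℝ) / 2) (β := n / 2) (by positivity) (by positivity)
  positivity

lemma omegaS_mul_omegaS_mul_integral_projNormWeight (m : ℕ) {n : ℕ} (hn : 0 < n) :
    omegaS (m + 1) * omegaS n * ∫ z in (0 : ℝ)..1, projNormWeight m n z = omegaS (m + 1 + n) := by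
  have hm_Gamma : 0 < Real.Gamma (((m + 1 : ℕ) : ℝ) / 2) := Real.Gamma_pos_of_pos (by positivity)
  have hn_Gamma : 0 < Real.Gamma ((n : ℝ) / 2) := Real.Gamma_pos_of_pos (by positivity)
  rw [integral_projNormWeight m hn, beta, omegaS, omegaS, omegaS, Nat.cast_add (m + 1) n, add_div,
    Real.rpow_add Real.pi_pos]
  field_simp [hm_Gamma.ne', hn_Gamma.ne']

end Sphere

section Klein

variable {K : ℝ}

lemma RK_eq (K x : ℝ) :
    RK K x = sinh (√(-K) * x) / (√(-K) * cosh (√(-K) * x)) := by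
  rw [RK, ← cosh_sq', Real.sqrt_sq (cosh_pos _).le]

lemma RK_zero (K : ℝ) : RK K 0 = 0 := by simp [RK]

lemma RK_pos (hK : K < 0) {x : ℝ} (hx : 0 < x) : 0 < RK K x := by
  have hk : 0 < √(-K) := Real.sqrt_pos.2 (neg_pos.2 hK)
  have hsinh : 0 < sinh (√(-K) * x) := sinh_pos_iff.2 (by positivity)
  rw [RK_eq]
  exact div_pos hsinh (mul_pos hk (cosh_pos _))

lemma RK_lt_one_div_sqrt (hK : K < 0) (x : ℝ) : RK K x < 1 / √(-K) := by
  have hk : 0 < √(-K) := Real.sqrt_pos.2 (neg_pos.2 hK)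
  rw [RK_eq, mul_comm √(-K) (cosh _), ← div_div]
  gcongr
  exact (div_lt_one (cosh_pos _)).2 (sinh_lt_cosh _)

lemma one_add_mul_RK_sq (hK : K < 0) (x : ℝ) :
    1 + K * RK K x ^ 2 = (cosh (√(-K) * x) ^ 2)⁻¹ := by
  have hk_sq : √(-K) ^ 2 = -K := Real.sq_sqrt (neg_pos.2 hK).le
  rw [RK_eq, div_pow, mul_pow, hk_sq, sinh_sq]
  field_simp [hK.ne, (cosh_pos (√(-K) * x)).ne']
  ring

lemma one_add_mul_RK_sq_pos (hK : K < 0) (x : ℝ) : 0 < 1 + K * RK K x ^ 2 := by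
  rw [one_add_mul_RK_sq hK]
  exact inv_pos.2 (pow_pos (cosh_pos _) 2)

lemma one_add_mul_sq_pos_of_abs_le_abs_RK (hK : K < 0) {s x : ℝ} (hs : |s| ≤ |RK K x|) :
    0 < 1 + K * s ^ 2 := by
  have hsq : s ^ 2 ≤ RK K x ^ 2 := sq_le_sq.2 hs
  linarith [one_add_mul_RK_sq_pos hK x, mul_le_mul_of_nonpos_left hsq hK.le]

lemma hasDerivAt_RK (hK : K < 0) (x : ℝ) :
    HasDerivAt (RK K) (cosh (√(-K) * x) ^ 2)⁻¹ x := by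
  have hk : 0 < √(-K) := Real.sqrt_pos.2 (neg_pos.2 hK)
  have hcosh := cosh_pos (√(-K) * x)
  have hlin : HasDerivAt (fun y => √(-K) * y) (√(-K)) x := by
    simpa using (hasDerivAt_id x).const_mul √(-K)
  have hquot := hlin.sinh.div (hlin.cosh.const_mul √(-K)) (mul_pos hk hcosh).ne'
  rw [show RK K = _ from funext (RK_eq K)]
  refine hquot.congr_deriv ?_
  field_simp
  rw [sinh_sq]
  ring

/-- Up to the factor `ω_{d-m}`, the density of the Euclidean distance to the origin of the
`m`-flats of the Beltrami–Klein model under the invariant measure. The subtraction `d - m - 1` is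
truncated, so only `m < d` is meaningful. -/
noncomputable def kleinFlatDensity (K : ℝ) (d m : ℕ) (s : ℝ) : ℝ :=
  s ^ (d - m - 1) * (1 + K * s ^ 2) ^ (-((d : ℝ) + 1) / 2)

lemma measurable_kleinFlatDensity (K : ℝ) (d m : ℕ) : Measurable (kleinFlatDensity K d m) := by
  unfold kleinFlatDensity
  fun_prop

lemma kleinFlatDensity_pos (d m : ℕ) {s : ℝ} (hs : 0 < s) (hs_Klein : 0 < 1 + K * s ^ 2) :
    0 < kleinFlatDensity K d m s := by
  unfold kleinFlatDensity
  positivity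

lemma continuousOn_kleinFlatDensity (K : ℝ) (d m : ℕ) :
    ContinuousOn (kleinFlatDensity K d m) {s | 0 < 1 + K * s ^ 2} := by
  unfold kleinFlatDensity
  refine ContinuousOn.mul (by fun_prop) (ContinuousOn.rpow_const (by fun_prop) fun s hs => ?_)
  exact Or.inl (ne_of_gt hs)

lemma intervalIntegrable_kleinFlatDensity (hK : K < 0) (d m : ℕ) (x : ℝ) :
    IntervalIntegrable (kleinFlatDensity K d m) volume 0 (RK K x) := by
  refine ((continuousOn_kleinFlatDensity K d m).mono fun s hs => ?_).intervalIntegrable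
  exact one_add_mul_sq_pos_of_abs_le_abs_RK hK (by simpa using abs_sub_left_of_mem_uIcc hs)

lemma kleinFlatDensity_RK_mul_deriv (hK : K < 0) {d m : ℕ} (hm : m < d) (x : ℝ) :
    kleinFlatDensity K d m (RK K x) * (cosh (√(-K) * x) ^ 2)⁻¹ =
      √(-K) ^ (-(d : ℝ) + m + 1) *
        (cosh (√(-K) * x) ^ m * sinh (√(-K) * x) ^ (d - m - 1)) := by
  obtain ⟨n, rfl⟩ := Nat.exists_eq_add_of_lt hm
  have hk : 0 < √(-K) := Real.sqrt_pos.2 (neg_pos.2 hK)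
  have hcosh := cosh_pos (√(-K) * x)
  have hcosh_pow : ((cosh (√(-K) * x) ^ 2)⁻¹) ^ (-(((m + n + 1 : ℕ) : ℝ) + 1) / 2) =
      cosh (√(-K) * x) ^ (m + n + 2) := by
    rw [← Real.rpow_natCast _ 2, ← Real.rpow_neg hcosh.le, ← Real.rpow_mul hcosh.le,
      ← Real.rpow_natCast]
    congr 1
    push_cast
    ring
  have hk_pow : √(-K) ^ (-((m + n + 1 : ℕ) : ℝ) + m + 1) = (√(-K) ^ n)⁻¹ := by
    rw [← Real.rpow_natCast, ← Real.rpow_neg hk.le]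
    congr 1
    push_cast
    ring
  have hn : m + n + 1 - m - 1 = n := by omega
  rw [kleinFlatDensity, one_add_mul_RK_sq hK, hcosh_pow, hk_pow, hn, RK_eq, div_pow, mul_pow]
  field_simp
  ring

lemma Cconst_eq_omegaS_mul_integral (hK : K < 0) {d m : ℕ} (hm : m < d) (u : ℝ) :
    Cconst K d m u = omegaS (d - m) * ∫ s in (0 : ℝ)..RK K u, kleinFlatDensity K d m s := by
  have hsubst := intervalIntegral.integral_comp_mul_deriv' (a := 0) (b := u)
    (g := kleinFlatDensity K d m) (fun x _ => hasDerivAt_RK hK x)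
    (by
      refine Continuous.continuousOn (Continuous.inv₀ (by fun_prop) fun x => ?_)
      exact pow_ne_zero 2 (cosh_pos _).ne')
    ((continuousOn_kleinFlatDensity K d m).mono ?_)
  · rw [RK_zero] at hsubst
    simp only [Cconst, mul_assoc, ← hsubst, ← intervalIntegral.integral_const_mul,
      Function.comp_apply, kleinFlatDensity_RK_mul_deriv hK hm]
  · rintro _ ⟨x, -, rfl⟩
    exact one_add_mul_RK_sq_pos hK x

end Klein

section Probability

variable {d q γ : ℕ} {K : ℝ}

lemma Pprob_integrand_eq (hq : q < d) (hγ : γ < q) (K r z : ℝ) :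
    r ^ ((q : ℝ) - γ - 1) * (z ^ q * (1 - z ^ 2) ^ (((d : ℝ) - q) / 2 - 1) *
        (1 + K * r ^ 2 * z ^ 2) ^ (-((d : ℝ) + 1) / 2)) =
      projNormWeight γ (d - q) z * (z * kleinFlatDensity K d (d - q + γ) (r * z)) := by
  have hcodim : d - (d - q + γ) - 1 = q - γ - 1 := by omega
  have hr_pow : r ^ ((q : ℝ) - γ - 1) = r ^ (q - γ - 1) := by
    rw [← Real.rpow_natCast, Nat.cast_sub (by omega), Nat.cast_sub hγ.le, Nat.cast_one]
  have hz_pow : z ^ q = z ^ γ * z * z ^ (q - γ - 1) := by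
    rw [← pow_succ, ← pow_add]
    congr 1
    omega
  rw [projNormWeight, kleinFlatDensity, hcodim, hr_pow, hz_pow, Nat.cast_sub hq.le, mul_pow,
    mul_pow, ← mul_assoc K]
  ring

lemma Dconst_mul_omegaS_div_Cconst (hq : q < d) (hγ : γ < q) (hK : K < 0) (u : ℝ) :
    Dconst d q γ * omegaS (d - γ) / Cconst K d (d - q + γ) u =
      ((∫ z in (0 : ℝ)..1, projNormWeight γ (d - q) z) *
        ∫ s in (0 : ℝ)..RK K u, kleinFlatDensity K d (d - q + γ) s)⁻¹ := by
  have hcodim : d - (d - q + γ) = q - γ := by omega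
  have hsum : d - q + γ + 1 = γ + 1 + (d - q) := by omega
  have hω_γ := omegaS_pos γ.succ_pos
  have hω_dq := omegaS_pos (Nat.sub_pos_of_lt hq)
  have hω_qγ := omegaS_pos (Nat.sub_pos_of_lt hγ)
  have hω_dγ := omegaS_pos (Nat.sub_pos_of_lt (hγ.trans hq))
  rw [Cconst_eq_omegaS_mul_integral hK (by omega), hcodim, Dconst, hsum,
    ← omegaS_mul_omegaS_mul_integral_projNormWeight γ (Nat.sub_pos_of_lt hq)]
  field_simp

lemma Pprob_eq_div (hq : q < d) (hγ : γ < q) (hK : K < 0) (u : ℝ) :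
    Pprob d q γ K u =
      (∫ r in (0 : ℝ)..1 / √(-K), ∫ z in (0 : ℝ)..min 1 (RK K u / r),
          projNormWeight γ (d - q) z * (z * kleinFlatDensity K d (d - q + γ) (r * z))) /
        ((∫ z in (0 : ℝ)..1, projNormWeight γ (d - q) z) *
          ∫ s in (0 : ℝ)..RK K u, kleinFlatDensity K d (d - q + γ) s) := by
  rw [Pprob, Dconst_mul_omegaS_div_Cconst hq hγ hK, inv_mul_eq_div]
  simp only [← intervalIntegral.integral_const_mul, Pprob_integrand_eq hq hγ]

end Probability

/-- the intersection probability is strictly less than 1 for any negative curvature. -/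
theorem intersection_prob_lt_one (d q γ : ℕ) (hd : 2 ≤ d) (hq1 : 1 ≤ q) (hq2 : q ≤ d - 1)
    (hγ : γ ≤ q - 1) (K u : ℝ) (hK : K < 0) (hu : 0 < u) :
    Pprob d q γ K u < 1 := by
  have hqd : q < d := by omega
  have hγq : γ < q := by omega
  have hR : 0 < RK K u := RK_pos hK hu
  have hR_le : RK K u ≤ 1 / √(-K) := (RK_lt_one_div_sqrt hK u).le
  have hw := intervalIntegrable_projNormWeight γ (Nat.sub_pos_of_lt hqd)
  have hw_pos := fun z (hz : z ∈ Ioo (0 : ℝ) 1) => projNormWeight_pos γ (d - q) hz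
  have hφ := intervalIntegrable_kleinFlatDensity hK d (d - q + γ) u
  have hφ_pos : ∀ s ∈ Ioc 0 (RK K u), 0 < kleinFlatDensity K d (d - q + γ) s := fun s hs =>
    kleinFlatDensity_pos _ _ hs.1
      (one_add_mul_sq_pos_of_abs_le_abs_RK hK (abs_le_abs_of_nonneg hs.1.le hs.2))
  have hw_int := intervalIntegral.intervalIntegral_pos_of_pos_on hw hw_pos one_pos
  have hφ_int := intervalIntegral.intervalIntegral_pos_of_pos_on hφ
    (fun s hs => hφ_pos s ⟨hs.1, hs.2.le⟩) hR
  rw [Pprob_eq_div hqd hγq hK, div_lt_one (mul_pos hw_int hφ_int)]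
  exact integral_integral_min_mul_comp_mul_lt hR hR_le hw hw_pos
    (measurable_kleinFlatDensity K d _) hφ hφ_pos
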